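/- arXiv:solv-int/9907001 — 2 statements merged into one kernel-verified Lean document; each statement's English description precedes it below -/
import Mathlib

section
/- Let a, b > 0 be real. Define q̃_{2m+1}(x) = p_{2m+1}(x) and q̃_{2m}(x) = 2^{6m} m! [Γ(a/2+b/2+m+1)Γ(a/2+m+1)Γ(b/2+m+1) / Γ(a+b+4m+2)] · Σ_{j=0}^{m} [Γ(a+b+4j+2) / (j!·2^{6j}·Γ(a/2+b/2+j+1)Γ(a/2+j+1)Γ(b/2+j+1))]·p_{2j}(x), where p_k are the monic Jacobi polynomials with parameters a, b. Then the family {q̃_j} is skew orthogonal with respect to the β = 4 skew inner product with weight (1−x)^{a+1}(1+x)^{b+1} on (−1, 1): for all natural numbers m, n one has ⟨q̃_{2m}, q̃_{2n}⟩₄ = 0, ⟨q̃_{2m+1}, q̃_{2n+1}⟩₄ = 0, and ⟨q̃_{2m}, q̃_{2n+1}⟩₄ = 0 if m ≠ n, while ⟨q̃_{2m}, q̃_{2m+1}⟩₄ = 2^{a+b+4m+2} Γ(2m+2)Γ(a+2m+2)Γ(b+2m+2)Γ(a+b+2m+2) / (Γ(a+b+4m+2)Γ(a+b+4m+4)). 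-/
open MeasureTheory Finset

/-- The Jacobi polynomial `P_n^{(a,b)}`. -/
noncomputable def jacobiP (a b : ℝ) (n : ℕ) (x : ℝ) : ℝ :=
  ∑ s ∈ range (n + 1),
    (Real.Gamma ((n : ℝ) + a + 1) / (Real.Gamma (a + (s : ℝ) + 1) * (Nat.factorial (n - s)))) *
    (Real.Gamma ((n : ℝ) + b + 1) / (Real.Gamma ((n : ℝ) + b - (s : ℝ) + 1) * (Nat.factorial s))) *
    ((x - 1) / 2) ^ s * ((x + 1) / 2) ^ (n - s)

/-- The monic Jacobi polynomials `p_k = 2^k k! Γ(a+b+k+1)/Γ(a+b+2k+1) · P_k^{(a,b)}`. -/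
noncomputable def jacobiMonic (a b : ℝ) (k : ℕ) (x : ℝ) : ℝ :=
  2 ^ k * (Nat.factorial k) * Real.Gamma (a + b + (k : ℝ) + 1) /
    Real.Gamma (a + b + 2 * (k : ℝ) + 1) * jacobiP a b k x

/-- The skew orthogonal candidates: `q̃_{2m+1} = p_{2m+1}`, and `q̃_{2m}` the explicit
combination of the even monic Jacobi polynomials. -/
noncomputable def qJSE (a b : ℝ) (j : ℕ) (x : ℝ) : ℝ :=
  if j % 2 = 1 then jacobiMonic a b j x
  else 2 ^ (3 * j) * (Nat.factorial (j / 2)) *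
    (Real.Gamma (a / 2 + b / 2 + (j / 2 : ℕ) + 1) * Real.Gamma (a / 2 + (j / 2 : ℕ) + 1) *
      Real.Gamma (b / 2 + (j / 2 : ℕ) + 1) / Real.Gamma (a + b + 2 * (j : ℝ) + 2)) *
    ∑ i ∈ range (j / 2 + 1),
      (Real.Gamma (a + b + 4 * (i : ℝ) + 2) /
        ((Nat.factorial i) * 2 ^ (6 * i) * Real.Gamma (a / 2 + b / 2 + (i : ℝ) + 1) *
          Real.Gamma (a / 2 + (i : ℝ) + 1) * Real.Gamma (b / 2 + (i : ℝ) + 1)))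
        * jacobiMonic a b (2 * i) x

/-- The β = 4 skew inner product with weight `(1−x)^{a+1} (1+x)^{b+1}` on `(−1, 1)`. -/
noncomputable def sip4J (a b : ℝ) (f g : ℝ → ℝ) : ℝ :=
  (1 / 2) * ∫ x in Set.Ioo (-1 : ℝ) 1,
    (1 - x) ^ (a + 1) * (1 + x) ^ (b + 1) * (f x * deriv g x - deriv f x * g x)

/-!
Write `w_{a,b}(x) = (1 - x)^a (1 + x)^b`, `W(f, g) = f g' - f' g`, and let `R_{a,b}` be the raising
operator `R_{a,b} f = w_{a,b}⁻¹ (w_{a+1,b+1} f)'`, which maps polynomials of degree `k` to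
polynomials of degree `k + 1`. Integrating a derivative, `R_{a,b} f` has mean zero against
`w_{a,b}`.

First, `R_{a,b}` sends `P_n^{(a+1,b+1)}` to `-2 (n + 1) P_{n+1}^{(a,b)}`. By induction this gives
the leading coefficients and the orthogonality of the Jacobi polynomials together with their squared
norms, hence `∫ w_{a,b} p_k² = h_k`.

Second, `(1 - x²) W(f, g) = R_{a,b}(f g) - 2 g N f`, where `N = R_{(a-1)/2,(b-1)/2}`. Integrated
against `w_{a,b}`, this gives `⟨f, g⟩₄ = -∫ w_{a,b} g N f`. As `N` raises degrees by one,
`⟨p_j, p_k⟩₄` vanishes unless `|j - k| = 1`, and `⟨p_j, p_{j+1}⟩₄` is a multiple of `h_{j+1}`. For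
such a tridiagonal alternating form, `∑_{i ≤ m} d_i p_{2i}` is skew orthogonal to `p_{2n+1}` for all
`n ≠ m` as soon as `d_n ⟨p_{2n}, p_{2n+1}⟩₄ = d_{n+1} ⟨p_{2n+1}, p_{2n+2}⟩₄` for all `n`.
-/

open Polynomial

section TridiagonalForm

variable {R M : Type*} [CommRing R] [AddCommGroup M] [Module R M]

/-- The combination `∑_{i ≤ m} d_i p_{2i}` of the even members of a sequence, from which the even
skew orthogonal vectors are built. -/
def evenSum (d : ℕ → R) (p : ℕ → M) (m : ℕ) : M :=
  ∑ i ∈ range (m + 1), d i • p (2 * i)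

lemma evenSum_succ (d : ℕ → R) (p : ℕ → M) (m : ℕ) :
    evenSum d p (m + 1) = evenSum d p m + d (m + 1) • p (2 * (m + 1)) :=
  sum_range_succ _ _

variable {B : LinearMap.BilinForm R M} {p : ℕ → M} {d : ℕ → R}

lemma apply_eq_zero_of_mod_two_eq (hB : B.IsAlt) (hp : ∀ j k, j + 1 < k → B (p j) (p k) = 0)
    {j k : ℕ} (hjk : j % 2 = k % 2) : B (p j) (p k) = 0 := by
  rcases lt_trichotomy j k with hlt | rfl | hgt
  · exact hp j k (by lia)
  · exact hB.self_eq_zero _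
  · rw [← hB.neg_eq, hp k j (by lia), neg_zero]

lemma apply_evenSum_evenSum (hB : B.IsAlt) (hp : ∀ j k, j + 1 < k → B (p j) (p k) = 0)
    (m n : ℕ) : B (evenSum d p m) (evenSum d p n) = 0 := by
  have hterm (i j : ℕ) : B (p (2 * i)) (p (2 * j)) = 0 :=
    apply_eq_zero_of_mod_two_eq hB hp (by lia)
  simp [evenSum, hterm]

lemma apply_evenSum_odd_of_lt (hp : ∀ j k, j + 1 < k → B (p j) (p k) = 0) {m n : ℕ} (hmn : m < n) :
    B (evenSum d p m) (p (2 * n + 1)) = 0 := by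
  rw [evenSum, map_sum, LinearMap.sum_apply]
  refine sum_eq_zero fun i hi => ?_
  rw [map_smul, LinearMap.smul_apply, hp _ _ (by grind), smul_zero]

lemma apply_evenSum_odd_self (hp : ∀ j k, j + 1 < k → B (p j) (p k) = 0) (n : ℕ) :
    B (evenSum d p n) (p (2 * n + 1)) = d n * B (p (2 * n)) (p (2 * n + 1)) := by
  cases n with
  | zero => simp [evenSum]
  | succ n =>
    rw [evenSum_succ, map_add, LinearMap.add_apply, apply_evenSum_odd_of_lt hp n.lt_succ_self]
    simp

lemma apply_evenSum_odd_of_gt (hB : B.IsAlt) (hp : ∀ j k, j + 1 < k → B (p j) (p k) = 0)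
    (hd : ∀ n, d n * B (p (2 * n)) (p (2 * n + 1)) =
      d (n + 1) * B (p (2 * n + 1)) (p (2 * n + 2)))
    {m n : ℕ} (hnm : n < m) : B (evenSum d p m) (p (2 * n + 1)) = 0 := by
  induction m, hnm using Nat.le_induction with
  | base =>
    rw [evenSum_succ, map_add, LinearMap.add_apply, apply_evenSum_odd_self hp, hd, map_smul,
      LinearMap.smul_apply, smul_eq_mul, ← hB.neg_eq, mul_neg, Nat.mul_succ, neg_add_cancel]
  | succ m hm ih =>
    rw [evenSum_succ, map_add, LinearMap.add_apply, ih, map_smul, LinearMap.smul_apply,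
      ← hB.neg_eq, hp _ _ (by lia), neg_zero, smul_zero, add_zero]

end TridiagonalForm

section RaisingOperator

variable {R : Type*} [CommRing R]

/-- The raising operator `f ↦ (1 - x²) f' + (b - a - (a + b + 2) x) f` of the Jacobi weight, which
is `f ↦ w_{a,b}⁻¹ (w_{a+1,b+1} f)'`. -/
noncomputable def jacobiRaise (a b : R) : R[X] →ₗ[R] R[X] :=
  LinearMap.mulLeft R (1 - X ^ 2) ∘ₗ derivative +
    LinearMap.mulLeft R (C (b - a) - C (a + b + 2) * X)

lemma jacobiRaise_apply (a b : R) (f : R[X]) :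
    jacobiRaise a b f = (1 - X ^ 2) * derivative f + (C (b - a) - C (a + b + 2) * X) * f :=
  rfl

lemma jacobiRaise_mul (a b : R) (f g : R[X]) :
    jacobiRaise a b (f * g) = jacobiRaise a b f * g + (1 - X ^ 2) * (f * derivative g) := by
  simp only [jacobiRaise_apply, derivative_mul]
  ring

lemma natDegree_jacobiRaise_le (a b : R) {f : R[X]} {k : ℕ} (hf : f.natDegree ≤ k) :
    (jacobiRaise a b f).natDegree ≤ k + 1 := by
  have hquadratic : (1 - X ^ 2 : R[X]).natDegree ≤ 2 := by compute_degree
  have hlinear : (C (b - a) - C (a + b + 2) * X).natDegree ≤ 1 := by compute_degree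
  rw [jacobiRaise_apply]
  refine natDegree_add_le_of_degree_le ?_
    ((natDegree_mul_le_of_le hlinear hf).trans_eq (add_comm _ _))
  rcases Nat.eq_zero_or_pos f.natDegree with hconst | hpos
  · simp [derivative_of_natDegree_zero hconst]
  · exact (natDegree_mul_le_of_le hquadratic (natDegree_derivative_le f)).trans (by lia)

lemma coeff_jacobiRaise_succ (a b : R) {f : R[X]} {k : ℕ} (hf : f.natDegree ≤ k) :
    (jacobiRaise a b f).coeff (k + 1) = -(k + (a + b + 2)) * f.coeff k := by
  have hcoeff_succ : f.coeff (k + 1) = 0 := coeff_eq_zero_of_natDegree_lt (by lia)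
  have hcoeff_succ_succ : f.coeff (k + 1 + 1) = 0 := coeff_eq_zero_of_natDegree_lt (by lia)
  have heuler : (X * derivative f).coeff k = k * f.coeff k := by
    cases k with
    | zero => simp
    | succ k => rw [coeff_X_mul, coeff_derivative, mul_comm]; push_cast; rfl
  have hexpand : jacobiRaise a b f = derivative f - X * (X * derivative f) + C (b - a) * f
      - C (a + b + 2) * (X * f) := by
    rw [jacobiRaise_apply]
    ring
  rw [hexpand]
  simp only [coeff_sub, coeff_add, coeff_X_mul, coeff_C_mul, coeff_derivative, hcoeff_succ,
    hcoeff_succ_succ, heuler]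
  ring

end RaisingOperator

section JacobiPolynomial

variable {a b : ℝ}

/-- The polynomial `((x - 1) / 2)^s ((x + 1) / 2)^k`, a member of the basis in which the Jacobi
polynomials are given. -/
noncomputable def jacobiBasis (s k : ℕ) : ℝ[X] :=
  (C (1 / 2) * (X - 1)) ^ s * (C (1 / 2) * (X + 1)) ^ k

lemma natDegree_jacobiBasis_le (s k : ℕ) : (jacobiBasis s k).natDegree ≤ s + k := by
  unfold jacobiBasis
  compute_degree

lemma jacobiRaise_jacobiBasis (a b : ℝ) (s k : ℕ) :
    jacobiRaise a b (jacobiBasis s k) =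
      C (-2) * (C (a + s + 1) * jacobiBasis s (k + 1) + C (b + k + 1) * jacobiBasis (s + 1) k) := by
  have heuler (n : ℕ) (y : ℝ) : n * y ^ (n - 1) * y = n * y ^ n := by
    cases n with
    | zero => simp
    | succ n => rw [Nat.add_sub_cancel, mul_assoc, ← pow_succ]
  refine Polynomial.funext fun x => ?_
  set u : ℝ := 1 / 2 * (x - 1) with hu
  set v : ℝ := 1 / 2 * (x + 1) with hv
  have hquadratic : 1 - x ^ 2 = -4 * (u * v) := by rw [hu, hv]; ring
  have hlinear : b - a - (a + b + 2) * x = -2 * ((b + 1) * u + (a + 1) * v) := by rw [hu, hv]; ring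
  simp only [jacobiRaise_apply, jacobiBasis, derivative_mul, derivative_pow, derivative_C,
    derivative_sub, derivative_add, derivative_X, derivative_one, eval_mul, eval_add, eval_sub,
    eval_pow, eval_C, eval_X, eval_one, eval_zero, ← hu, ← hv]
  rw [hquadratic, hlinear]
  linear_combination -2 * v ^ (k + 1) * heuler s u - 2 * u ^ (s + 1) * heuler k v

/-- The coefficient of `((x - 1) / 2)^s ((x + 1) / 2)^k` in the Jacobi polynomial of degree
`s + k`. -/
noncomputable def jacobiCoeff (a b : ℝ) (s k : ℕ) : ℝ :=
  Real.Gamma (a + s + k + 1) / (Real.Gamma (a + s + 1) * k.factorial) *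
    (Real.Gamma (b + s + k + 1) / (Real.Gamma (b + k + 1) * s.factorial))

lemma jacobiCoeff_comm (a b : ℝ) (s k : ℕ) : jacobiCoeff a b s k = jacobiCoeff b a k s := by
  rw [jacobiCoeff, jacobiCoeff, mul_comm, add_right_comm a, add_right_comm b]

lemma jacobiCoeff_zero_zero (ha : -1 < a) (hb : -1 < b) : jacobiCoeff a b 0 0 = 1 := by
  have hΓa : Real.Gamma (a + 1) ≠ 0 := (Real.Gamma_pos_of_pos (by linarith)).ne'
  have hΓb : Real.Gamma (b + 1) ≠ 0 := (Real.Gamma_pos_of_pos (by linarith)).ne'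
  simp [jacobiCoeff, hΓa, hΓb]

lemma jacobiCoeff_succ_right (ha : -1 < a) (b : ℝ) (s k : ℕ) :
    (k + 1) * jacobiCoeff a b s (k + 1) = (a + s + 1) * jacobiCoeff (a + 1) (b + 1) s k := by
  have hs : a + s + 1 ≠ 0 := by linarith [s.cast_nonneg (α := ℝ)]
  have hΓ : Real.Gamma (a + 1 + s + 1) = (a + s + 1) * Real.Gamma (a + s + 1) := by
    rw [← Real.Gamma_add_one hs]
    ring_nf
  simp only [jacobiCoeff, hΓ, Nat.factorial_succ]
  push_cast
  field_simp
  ring_nf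

lemma jacobiCoeff_succ_left (a : ℝ) (hb : -1 < b) (s k : ℕ) :
    (s + 1) * jacobiCoeff a b (s + 1) k = (b + k + 1) * jacobiCoeff (a + 1) (b + 1) s k := by
  rw [jacobiCoeff_comm, jacobiCoeff_succ_right hb, jacobiCoeff_comm]

/-- The Jacobi polynomial `P_n^{(a,b)}` as an element of `ℝ[X]`. -/
noncomputable def jacobiPoly (a b : ℝ) (n : ℕ) : ℝ[X] :=
  ∑ p ∈ antidiagonal n, C (jacobiCoeff a b p.1 p.2) * jacobiBasis p.1 p.2

lemma eval_jacobiPoly (a b : ℝ) (n : ℕ) (x : ℝ) : (jacobiPoly a b n).eval x = jacobiP a b n x := by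
  rw [jacobiPoly, Nat.sum_antidiagonal_eq_sum_range_succ_mk, eval_finsetSum, jacobiP]
  refine sum_congr rfl fun s hs => ?_
  obtain ⟨k, rfl⟩ := Nat.exists_eq_add_of_le (mem_range_succ_iff.mp hs)
  simp only [jacobiCoeff, jacobiBasis, eval_mul, eval_C, eval_pow, eval_sub, eval_add, eval_X,
    eval_one, Nat.add_sub_cancel_left]
  push_cast
  ring_nf

lemma jacobiPoly_zero (ha : -1 < a) (hb : -1 < b) : jacobiPoly a b 0 = 1 := by
  simp [jacobiPoly, jacobiBasis, jacobiCoeff_zero_zero ha hb]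

lemma natDegree_jacobiPoly_le (a b : ℝ) (n : ℕ) : (jacobiPoly a b n).natDegree ≤ n := by
  refine natDegree_sum_le_of_forall_le _ _ fun p hp => ?_
  rw [← mem_antidiagonal.mp hp]
  exact (natDegree_C_mul_le _ _).trans (natDegree_jacobiBasis_le _ _)

lemma jacobiRaise_jacobiPoly (ha : -1 < a) (hb : -1 < b) (n : ℕ) :
    jacobiRaise a b (jacobiPoly (a + 1) (b + 1) n) =
      C (-2 * (n + 1 : ℝ)) * jacobiPoly a b (n + 1) := by
  let term (p : ℕ × ℕ) : ℝ[X] := C (jacobiCoeff a b p.1 p.2) * jacobiBasis p.1 p.2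
  have hraise (p : ℕ × ℕ) :
      jacobiRaise a b (C (jacobiCoeff (a + 1) (b + 1) p.1 p.2) * jacobiBasis p.1 p.2) =
        C (-2) * (C (p.2 + 1 : ℝ) * term (p.1, p.2 + 1) +
          C (p.1 + 1 : ℝ) * term (p.1 + 1, p.2)) := by
    have hright := congrArg C (jacobiCoeff_succ_right ha b p.1 p.2)
    have hleft := congrArg C (jacobiCoeff_succ_left a hb p.1 p.2)
    rw [C_mul, C_mul] at hright hleft
    rw [← smul_eq_C_mul, map_smul, jacobiRaise_jacobiBasis, smul_eq_C_mul]
    linear_combination -C (-2) * (jacobiBasis p.1 (p.2 + 1) * hright +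
      jacobiBasis (p.1 + 1) p.2 * hleft)
  have hright : ∑ p ∈ antidiagonal n, C (p.2 + 1 : ℝ) * term (p.1, p.2 + 1) =
      ∑ p ∈ antidiagonal (n + 1), C (p.2 : ℝ) * term p := by
    simp [Nat.sum_antidiagonal_succ']
  have hleft : ∑ p ∈ antidiagonal n, C (p.1 + 1 : ℝ) * term (p.1 + 1, p.2) =
      ∑ p ∈ antidiagonal (n + 1), C (p.1 : ℝ) * term p := by
    simp [Nat.sum_antidiagonal_succ]
  have hcombine (p : ℕ × ℕ) (hp : p ∈ antidiagonal (n + 1)) :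
      C (p.2 : ℝ) * term p + C (p.1 : ℝ) * term p = C (n + 1 : ℝ) * term p := by
    rw [← add_mul, ← C_add, add_comm (p.2 : ℝ)]
    exact_mod_cast congrArg (fun j : ℕ => C (j : ℝ) * term p) (mem_antidiagonal.mp hp)
  simp only [jacobiPoly, map_sum, hraise, ← mul_sum, sum_add_distrib, hright, hleft]
  rw [← sum_add_distrib, sum_congr rfl hcombine, ← mul_sum, C_mul, mul_assoc]

lemma coeff_jacobiPoly_self (ha : -1 < a) (hb : -1 < b) (n : ℕ) :
    2 ^ n * n.factorial * Real.Gamma (a + b + n + 1) * (jacobiPoly a b n).coeff n =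
      Real.Gamma (a + b + 2 * n + 1) := by
  induction n generalizing a b with
  | zero => simp [jacobiPoly_zero ha hb]
  | succ n ih =>
    have hlead := congrArg (coeff · (n + 1)) (jacobiRaise_jacobiPoly ha hb n)
    simp only [coeff_jacobiRaise_succ _ _ (natDegree_jacobiPoly_le _ _ n), coeff_C_mul] at hlead
    have hpos : 0 < a + b + n + 2 := by linarith [n.cast_nonneg (α := ℝ)]
    have hΓ : Real.Gamma (a + 1 + (b + 1) + n + 1) =
        (a + b + n + 2) * Real.Gamma (a + b + n + 2) := by
      rw [← Real.Gamma_add_one hpos.ne']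
      ring_nf
    have ih := ih (a := a + 1) (b := b + 1) (by linarith) (by linarith)
    rw [hΓ] at ih
    rw [Nat.factorial_succ]
    push_cast
    rw [show a + b + (n + 1 : ℝ) + 1 = a + b + n + 2 by ring,
      show a + b + 2 * (n + 1 : ℝ) + 1 = a + 1 + (b + 1) + 2 * n + 1 by ring, ← ih]
    linear_combination (2 ^ n * n.factorial * Real.Gamma (a + b + n + 2)) * hlead

end JacobiPolynomial

section JacobiFunctional

variable {a b : ℝ}

lemma integral_rpow_mul_one_sub_rpow (ha : -1 < a) (hb : -1 < b) :
    ∫ x in (0 : ℝ)..1, x ^ a * (1 - x) ^ b =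
      Real.Gamma (a + 1) * Real.Gamma (b + 1) / Real.Gamma (a + b + 2) := by
  have hcongr : Complex.betaIntegral (a + 1 : ℝ) (b + 1 : ℝ) =
      (∫ x in (0 : ℝ)..1, x ^ a * (1 - x) ^ b : ℝ) := by
    rw [Complex.betaIntegral, ← intervalIntegral.integral_ofReal]
    refine intervalIntegral.integral_congr fun x hx => ?_
    rw [Set.uIcc_of_le zero_le_one] at hx
    simp [Complex.ofReal_cpow hx.1, Complex.ofReal_cpow (sub_nonneg.mpr hx.2)]
  rw [← Complex.ofReal_re (∫ x in (0 : ℝ)..1, _), ← hcongr,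
    ← ProbabilityTheory.beta_eq_betaIntegralReal _ _ (by linarith) (by linarith),
    ProbabilityTheory.beta]
  ring_nf

/-- The Jacobi weight `(1 - x)^a (1 + x)^b`, to be used on `[-1, 1]` only. -/
noncomputable def jacobiWeight (a b x : ℝ) : ℝ :=
  (1 - x) ^ a * (1 + x) ^ b

/-- The total mass of the Jacobi weight `(1 - x)^a (1 + x)^b` on `[-1, 1]`, in closed form. -/
noncomputable def jacobiMass (a b : ℝ) : ℝ :=
  2 ^ (a + b + 1) * Real.Gamma (a + 1) * Real.Gamma (b + 1) / Real.Gamma (a + b + 2)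

lemma jacobiMass_pos (ha : -1 < a) (hb : -1 < b) : 0 < jacobiMass a b := by
  have hΓa := Real.Gamma_pos_of_pos (show 0 < a + 1 by linarith)
  have hΓb := Real.Gamma_pos_of_pos (show 0 < b + 1 by linarith)
  have hΓab := Real.Gamma_pos_of_pos (show 0 < a + b + 2 by linarith)
  unfold jacobiMass
  positivity

lemma integral_jacobiWeight (ha : -1 < a) (hb : -1 < b) :
    ∫ x in (-1 : ℝ)..1, jacobiWeight a b x = jacobiMass a b := by
  have hscale : ∀ t ∈ Set.uIcc (0 : ℝ) 1,
      jacobiWeight a b (2 * t - 1) = 2 ^ (a + b) * (t ^ b * (1 - t) ^ a) := by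
    intro t ht
    rw [Set.uIcc_of_le zero_le_one] at ht
    rw [jacobiWeight, show 1 - (2 * t - 1) = 2 * (1 - t) by ring,
      show 1 + (2 * t - 1) = 2 * t by ring, Real.mul_rpow zero_le_two (sub_nonneg.mpr ht.2),
      Real.mul_rpow zero_le_two ht.1, Real.rpow_add zero_lt_two]
    ring
  have hsubst : (2 : ℝ) • ∫ t in (0 : ℝ)..1, jacobiWeight a b (2 * t - 1) =
      ∫ x in (-1 : ℝ)..1, jacobiWeight a b x := by
    rw [intervalIntegral.smul_integral_comp_mul_sub]
    norm_num
  rw [← hsubst, intervalIntegral.integral_congr hscale, intervalIntegral.integral_const_mul,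
    integral_rpow_mul_one_sub_rpow hb ha, jacobiMass, Real.rpow_add_one two_ne_zero, add_comm b a,
    smul_eq_mul]
  ring

lemma intervalIntegrable_jacobiWeight_mul_eval (ha : -1 < a) (hb : -1 < b) (f : ℝ[X]) :
    IntervalIntegrable (fun x => jacobiWeight a b x * f.eval x) volume (-1) 1 := by
  refine IntervalIntegrable.mul_continuousOn ?_ f.continuous.continuousOn
  -- The integral of a non-integrable function is `0` by convention.
  by_contra hw
  exact (jacobiMass_pos ha hb).ne
    ((intervalIntegral.integral_undef hw).symm.trans (integral_jacobiWeight ha hb))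

/-- The moment functional `f ↦ ∫ f(x) (1 - x)^a (1 + x)^b dx` of the Jacobi weight on `[-1, 1]`. The
bounds on `a` and `b` make the weight integrable, which linearity requires. -/
noncomputable def jacobiFunctional (ha : -1 < a) (hb : -1 < b) : ℝ[X] →ₗ[ℝ] ℝ where
  toFun f := ∫ x in (-1 : ℝ)..1, jacobiWeight a b x * f.eval x
  map_add' f g := by
    simp only [eval_add, mul_add]
    exact intervalIntegral.integral_add (intervalIntegrable_jacobiWeight_mul_eval ha hb f)
      (intervalIntegrable_jacobiWeight_mul_eval ha hb g)
  map_smul' c f := by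
    simp only [eval_smul, mul_smul_comm, intervalIntegral.integral_smul, RingHom.id_apply]

lemma jacobiFunctional_apply (ha : -1 < a) (hb : -1 < b) (f : ℝ[X]) :
    jacobiFunctional ha hb f = ∫ x in (-1 : ℝ)..1, jacobiWeight a b x * f.eval x :=
  rfl

lemma jacobiFunctional_one (ha : -1 < a) (hb : -1 < b) :
    jacobiFunctional ha hb 1 = jacobiMass a b := by
  simp only [jacobiFunctional_apply, eval_one, mul_one, integral_jacobiWeight ha hb]

lemma jacobiWeight_add_one (ha : -1 < a) (hb : -1 < b) {x : ℝ} (hx : x ∈ Set.Icc (-1 : ℝ) 1) :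
    jacobiWeight (a + 1) (b + 1) x = jacobiWeight a b x * (1 - x ^ 2) := by
  rw [jacobiWeight, jacobiWeight, Real.rpow_add_one' (by linarith [hx.2]) (by linarith),
    Real.rpow_add_one' (by linarith [hx.1]) (by linarith)]
  ring

lemma jacobiFunctional_add_one (ha : -1 < a) (hb : -1 < b) (f : ℝ[X]) :
    jacobiFunctional (a := a + 1) (b := b + 1) (by linarith) (by linarith) f =
      jacobiFunctional ha hb ((1 - X ^ 2) * f) := by
  simp only [jacobiFunctional_apply]
  refine intervalIntegral.integral_congr fun x hx => ?_
  rw [Set.uIcc_of_le (by norm_num)] at hx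
  simp only [jacobiWeight_add_one ha hb hx, eval_mul, eval_sub, eval_one, eval_pow, eval_X]
  ring

lemma hasDerivAt_jacobiWeight_mul_eval (a b : ℝ) (f : ℝ[X]) {x : ℝ}
    (hx : x ∈ Set.Ioo (-1 : ℝ) 1) :
    HasDerivAt (fun y => jacobiWeight (a + 1) (b + 1) y * f.eval y)
      (jacobiWeight a b x * (jacobiRaise a b f).eval x) x := by
  have hpos_left : 0 < 1 - x := sub_pos.mpr hx.2
  have hpos_right : 0 < 1 + x := by linarith [hx.1]
  have hderiv_left :
      HasDerivAt (fun y : ℝ => (1 - y) ^ (a + 1)) (-1 * (a + 1) * (1 - x) ^ a) x := by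
    simpa using ((hasDerivAt_id x).const_sub 1).rpow_const (p := a + 1) (Or.inl hpos_left.ne')
  have hderiv_right :
      HasDerivAt (fun y : ℝ => (1 + y) ^ (b + 1)) (1 * (b + 1) * (1 + x) ^ b) x := by
    simpa using ((hasDerivAt_id x).const_add 1).rpow_const (p := b + 1) (Or.inl hpos_right.ne')
  refine ((hderiv_left.mul hderiv_right).mul (f.hasDerivAt x)).congr_deriv ?_
  simp only [Pi.mul_apply, jacobiWeight, jacobiRaise_apply, Real.rpow_add_one hpos_left.ne',
    Real.rpow_add_one hpos_right.ne', eval_mul, eval_add, eval_sub, eval_one, eval_pow, eval_X,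
    eval_C]
  ring

lemma jacobiFunctional_jacobiRaise (ha : -1 < a) (hb : -1 < b) (f : ℝ[X]) :
    jacobiFunctional ha hb (jacobiRaise a b f) = 0 := by
  have hcont : Continuous fun x => jacobiWeight (a + 1) (b + 1) x * f.eval x :=
    (((continuous_const.sub continuous_id).rpow_const fun _ => Or.inr (by linarith)).mul
      ((continuous_const.add continuous_id).rpow_const fun _ => Or.inr (by linarith))).mul
      f.continuous
  rw [jacobiFunctional_apply, intervalIntegral.integral_eq_sub_of_hasDerivAt_of_le (by norm_num)
    hcont.continuousOn (fun x hx => hasDerivAt_jacobiWeight_mul_eval a b f hx)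
    (intervalIntegrable_jacobiWeight_mul_eval ha hb _)]
  have ha' : a + 1 ≠ 0 := by linarith
  have hb' : b + 1 ≠ 0 := by linarith
  simp [jacobiWeight, Real.zero_rpow ha', Real.zero_rpow hb']

lemma jacobiFunctional_jacobiPoly_mul (ha : -1 < a) (hb : -1 < b) {n : ℕ} {f : ℝ[X]}
    (hf : f.natDegree ≤ n) :
    jacobiFunctional ha hb (jacobiPoly a b n * f) =
      f.coeff n * ((1 / 2) ^ n * jacobiMass (a + n) (b + n)) := by
  induction n generalizing a b f with
  | zero =>
    rw [eq_C_of_natDegree_le_zero hf, jacobiPoly_zero ha hb, one_mul, ← mul_one (C _),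
      ← smul_eq_C_mul, map_smul, jacobiFunctional_one]
    simp
  | succ n ih =>
    have hparts := jacobiFunctional_jacobiRaise ha hb (jacobiPoly (a + 1) (b + 1) n * f)
    rw [jacobiRaise_mul, jacobiRaise_jacobiPoly ha hb, mul_assoc, ← smul_eq_C_mul, map_add,
      map_smul, ← jacobiFunctional_add_one ha hb,
      ih _ _ ((natDegree_derivative_le f).trans (by lia)), coeff_derivative, smul_eq_mul,
      show a + 1 + (n : ℝ) = a + (n + 1 : ℕ) by push_cast; ring,
      show b + 1 + (n : ℝ) = b + (n + 1 : ℕ) by push_cast; ring] at hparts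
    have hn : 2 * (n + 1 : ℝ) ≠ 0 := by positivity
    refine mul_left_cancel₀ hn ?_
    linear_combination -hparts

end JacobiFunctional

section JacobiMonic

variable {a b : ℝ}

/-- The monic Jacobi polynomial `p_k` as an element of `ℝ[X]`. -/
noncomputable def jacobiMonicPoly (a b : ℝ) (k : ℕ) : ℝ[X] :=
  C (2 ^ k * k.factorial * Real.Gamma (a + b + k + 1) / Real.Gamma (a + b + 2 * k + 1)) *
    jacobiPoly a b k

/-- The squared norm `h_k` of the monic Jacobi polynomial `p_k`, in closed form. -/
noncomputable def jacobiSqNorm (a b : ℝ) (k : ℕ) : ℝ :=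
  2 ^ (a + b + 2 * k + 1) * k.factorial * Real.Gamma (a + b + k + 1) * Real.Gamma (a + k + 1) *
    Real.Gamma (b + k + 1) / (Real.Gamma (a + b + 2 * k + 1) * Real.Gamma (a + b + 2 * k + 2))

lemma eval_jacobiMonicPoly (a b : ℝ) (k : ℕ) (x : ℝ) :
    (jacobiMonicPoly a b k).eval x = jacobiMonic a b k x := by
  rw [jacobiMonicPoly, eval_mul, eval_C, eval_jacobiPoly, jacobiMonic]

lemma natDegree_jacobiMonicPoly_le (a b : ℝ) (k : ℕ) : (jacobiMonicPoly a b k).natDegree ≤ k :=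
  (natDegree_C_mul_le _ _).trans (natDegree_jacobiPoly_le a b k)

lemma coeff_jacobiMonicPoly_self (ha : -1 < a) (hb : -1 < b) (hab : a + b ≠ -1) (k : ℕ) :
    (jacobiMonicPoly a b k).coeff k = 1 := by
  have hΓ : Real.Gamma (a + b + 2 * k + 1) ≠ 0 := by
    cases k with
    | zero =>
      have hne : a + b + 1 ≠ 0 := fun h => hab (by linarith)
      have hpos : 0 < Real.Gamma (a + b + 1 + 1) := Real.Gamma_pos_of_pos (by linarith)
      rw [Real.Gamma_add_one hne] at hpos
      simpa using right_ne_zero_of_mul hpos.ne'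
    | succ k => exact (Real.Gamma_pos_of_pos (by push_cast; linarith [k.cast_nonneg (α := ℝ)])).ne'
  rw [jacobiMonicPoly, coeff_C_mul, div_mul_eq_mul_div, coeff_jacobiPoly_self ha hb, div_self hΓ]

lemma jacobiFunctional_jacobiMonicPoly_mul (ha : -1 < a) (hb : -1 < b) {k : ℕ} {f : ℝ[X]}
    (hf : f.natDegree ≤ k) :
    jacobiFunctional ha hb (jacobiMonicPoly a b k * f) = f.coeff k * jacobiSqNorm a b k := by
  rw [jacobiMonicPoly, mul_assoc, ← smul_eq_C_mul, map_smul,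
    jacobiFunctional_jacobiPoly_mul ha hb hf, jacobiMass, jacobiSqNorm, smul_eq_mul,
    show a + k + (b + k) = a + b + 2 * k by ring, one_div, inv_pow]
  field_simp

lemma gamma_add_two {s : ℝ} (hs : 0 < s) :
    Real.Gamma (s + 2) = (s + 1) * s * Real.Gamma s := by
  rw [show s + 2 = s + 1 + 1 by ring, Real.Gamma_add_one (by positivity), Real.Gamma_add_one hs.ne',
    mul_assoc]

lemma jacobiSqNorm_succ (ha : -1 < a) (hb : -1 < b) {k : ℕ} (hk : 0 < a + b + k + 1) :
    (a + b + 2 * k + 1) * (a + b + 2 * k + 2) ^ 2 * (a + b + 2 * k + 3) * jacobiSqNorm a b (k + 1) =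
      4 * (k + 1) * (a + b + k + 1) * (a + k + 1) * (b + k + 1) * jacobiSqNorm a b k := by
  have _ : 0 ≤ (k : ℝ) := k.cast_nonneg
  have hak : 0 < a + k + 1 := by linarith
  have hbk : 0 < b + k + 1 := by linarith
  have habk : 0 < a + b + 2 * k + 1 := by linarith
  have habk' : 0 < a + b + 2 * k + 2 := by linarith
  have _ : 0 < Real.Gamma (a + b + 2 * k + 1) := Real.Gamma_pos_of_pos habk
  have _ : 0 < Real.Gamma (a + b + 2 * k + 2) := Real.Gamma_pos_of_pos habk'
  have hpow : (2 : ℝ) ^ (a + b + 2 * k + 3) = 2 ^ (a + b + 2 * k + 1) * 4 := by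
    rw [show a + b + 2 * k + 3 = a + b + 2 * k + 1 + 2 by ring, Real.rpow_add zero_lt_two]
    norm_num
  simp only [jacobiSqNorm, Nat.factorial_succ]
  push_cast
  rw [show a + b + 2 * (k + 1 : ℝ) + 1 = a + b + 2 * k + 3 by ring, hpow,
    show a + b + 2 * k + 3 = a + b + 2 * k + 1 + 2 by ring, gamma_add_two habk,
    show a + b + 2 * (k + 1 : ℝ) + 2 = a + b + 2 * k + 2 + 2 by ring, gamma_add_two habk',
    ← add_assoc, ← add_assoc, ← add_assoc, Real.Gamma_add_one hk.ne', Real.Gamma_add_one hak.ne',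
    Real.Gamma_add_one hbk.ne']
  field_simp
  ring

end JacobiMonic

section BetaFourForm

variable {a b : ℝ}

/-- The `β = 4` skew inner product `⟨f, g⟩₄` with weight `(1 - x)^(a+1) (1 + x)^(b+1)`, as a
bilinear form on polynomials. -/
noncomputable def betaFourForm (ha : -1 < a) (hb : -1 < b) : LinearMap.BilinForm ℝ ℝ[X] :=
  (1 / 2 : ℝ) • (wronskianBilin ℝ).compr₂
    (jacobiFunctional (a := a + 1) (b := b + 1) (by linarith) (by linarith))

lemma betaFourForm_apply (ha : -1 < a) (hb : -1 < b) (f g : ℝ[X]) :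
    betaFourForm ha hb f g = 1 / 2 *
      jacobiFunctional (a := a + 1) (b := b + 1) (by linarith) (by linarith) (wronskian f g) :=
  rfl

lemma isAlt_betaFourForm (ha : -1 < a) (hb : -1 < b) : (betaFourForm ha hb).IsAlt := fun f => by
  rw [betaFourForm_apply, wronskian_self_eq_zero, map_zero, mul_zero]

lemma sip4J_eval (ha : -1 < a) (hb : -1 < b) (f g : ℝ[X]) :
    sip4J a b f.eval g.eval = betaFourForm ha hb f g := by
  simp [sip4J, betaFourForm_apply, jacobiFunctional_apply, jacobiWeight, wronskian,
    intervalIntegral.integral_of_le, integral_Ioc_eq_integral_Ioo]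

lemma one_sub_sq_mul_wronskian (a b : ℝ) (f g : ℝ[X]) :
    (1 - X ^ 2) * wronskian f g =
      jacobiRaise a b (f * g) - (2 : ℝ) • (g * jacobiRaise ((a - 1) / 2) ((b - 1) / 2) f) := by
  refine Polynomial.funext fun x => ?_
  simp only [jacobiRaise_apply, wronskian, derivative_mul, eval_mul, eval_add, eval_sub, eval_smul,
    eval_pow, eval_C, eval_X, eval_one, smul_eq_mul]
  ring

lemma betaFourForm_eq_neg_jacobiFunctional (ha : -1 < a) (hb : -1 < b) (f g : ℝ[X]) :
    betaFourForm ha hb f g =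
      -jacobiFunctional ha hb (g * jacobiRaise ((a - 1) / 2) ((b - 1) / 2) f) := by
  rw [betaFourForm_apply, jacobiFunctional_add_one ha hb, one_sub_sq_mul_wronskian a b, map_sub,
    jacobiFunctional_jacobiRaise, map_smul, smul_eq_mul]
  ring

lemma betaFourForm_jacobiMonicPoly_of_lt (ha : -1 < a) (hb : -1 < b) {j k : ℕ} (hjk : j + 1 < k) :
    betaFourForm ha hb (jacobiMonicPoly a b j) (jacobiMonicPoly a b k) = 0 := by
  have hdeg := natDegree_jacobiRaise_le ((a - 1) / 2) ((b - 1) / 2)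
    (natDegree_jacobiMonicPoly_le a b j)
  rw [betaFourForm_eq_neg_jacobiFunctional,
    jacobiFunctional_jacobiMonicPoly_mul ha hb (hdeg.trans hjk.le),
    coeff_eq_zero_of_natDegree_lt (hdeg.trans_lt hjk), zero_mul, neg_zero]

lemma betaFourForm_jacobiMonicPoly_succ (ha : -1 < a) (hb : -1 < b) (hab : a + b ≠ -1) (j : ℕ) :
    betaFourForm ha hb (jacobiMonicPoly a b j) (jacobiMonicPoly a b (j + 1)) =
      (j + (a + b) / 2 + 1) * jacobiSqNorm a b (j + 1) := by
  have hdeg := natDegree_jacobiMonicPoly_le a b j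
  rw [betaFourForm_eq_neg_jacobiFunctional,
    jacobiFunctional_jacobiMonicPoly_mul ha hb (natDegree_jacobiRaise_le _ _ hdeg),
    coeff_jacobiRaise_succ _ _ hdeg, coeff_jacobiMonicPoly_self ha hb hab]
  ring

end BetaFourForm

section SkewOrthogonality

variable {a b : ℝ}

/-- The coefficient `d_i` of `p_{2i}` in the sum defining `q̃_{2m}`, whose prefactor is `d_m⁻¹`. -/
noncomputable def jacobiSkewCoeff (a b : ℝ) (i : ℕ) : ℝ :=
  Real.Gamma (a + b + 4 * i + 2) /
    (i.factorial * 2 ^ (6 * i) * Real.Gamma (a / 2 + b / 2 + i + 1) * Real.Gamma (a / 2 + i + 1) *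
      Real.Gamma (b / 2 + i + 1))

lemma jacobiSkewCoeff_ne_zero (ha : -1 < a) (hb : -1 < b) (i : ℕ) : jacobiSkewCoeff a b i ≠ 0 := by
  have _ : 0 ≤ (i : ℝ) := i.cast_nonneg
  have hΓ := Real.Gamma_pos_of_pos (show 0 < a + b + 4 * i + 2 by linarith)
  have hΓab := Real.Gamma_pos_of_pos (show 0 < a / 2 + b / 2 + i + 1 by linarith)
  have hΓa := Real.Gamma_pos_of_pos (show 0 < a / 2 + i + 1 by linarith)
  have hΓb := Real.Gamma_pos_of_pos (show 0 < b / 2 + i + 1 by linarith)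
  unfold jacobiSkewCoeff
  positivity

lemma jacobiSkewCoeff_succ (ha : -1 < a) (hb : -1 < b) (n : ℕ) :
    4 * (2 * n + 2) * (a + b + 2 * n + 2) * (a + 2 * n + 2) * (b + 2 * n + 2) *
        jacobiSkewCoeff a b (n + 1) =
      (a + b + 4 * n + 2) * (a + b + 4 * n + 3) * (a + b + 4 * n + 4) * (a + b + 4 * n + 5) *
        jacobiSkewCoeff a b n := by
  have _ : 0 ≤ (n : ℝ) := n.cast_nonneg
  have hpos : 0 < a + b + 4 * n + 2 := by linarith
  have hpos_ab : 0 < a / 2 + b / 2 + n + 1 := by linarith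
  have hpos_a : 0 < a / 2 + n + 1 := by linarith
  have hpos_b : 0 < b / 2 + n + 1 := by linarith
  have hnumerator : Real.Gamma (a + b + 4 * (n + 1 : ℕ) + 2) =
      (a + b + 4 * n + 5) * (a + b + 4 * n + 4) * ((a + b + 4 * n + 3) * (a + b + 4 * n + 2) *
        Real.Gamma (a + b + 4 * n + 2)) := by
    rw [Nat.cast_succ, show a + b + 4 * (n + 1 : ℝ) + 2 = a + b + 4 * n + 2 + 2 + 2 by ring,
      gamma_add_two (add_pos hpos two_pos), gamma_add_two hpos]
    ring
  have hdenominator : ((n + 1).factorial : ℝ) * 2 ^ (6 * (n + 1)) *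
      Real.Gamma (a / 2 + b / 2 + (n + 1 : ℕ) + 1) * Real.Gamma (a / 2 + (n + 1 : ℕ) + 1) *
        Real.Gamma (b / 2 + (n + 1 : ℕ) + 1) =
      4 * (2 * n + 2) * (a + b + 2 * n + 2) * (a + 2 * n + 2) * (b + 2 * n + 2) *
        (n.factorial * 2 ^ (6 * n) * Real.Gamma (a / 2 + b / 2 + n + 1) *
          Real.Gamma (a / 2 + n + 1) * Real.Gamma (b / 2 + n + 1)) := by
    rw [Nat.factorial_succ, Nat.cast_mul, Nat.cast_succ, ← add_assoc, ← add_assoc, ← add_assoc,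
      Real.Gamma_add_one hpos_ab.ne', Real.Gamma_add_one hpos_a.ne', Real.Gamma_add_one hpos_b.ne']
    ring
  have hfactor : 4 * (2 * n + 2) * (a + b + 2 * n + 2) * (a + 2 * n + 2) * (b + 2 * n + 2) ≠ 0 := by
    refine ne_of_gt (mul_pos (mul_pos (mul_pos ?_ ?_) ?_) ?_) <;> linarith
  rw [jacobiSkewCoeff, jacobiSkewCoeff, hnumerator, hdenominator, ← mul_div_assoc,
    mul_div_mul_left _ _ hfactor]
  ring

lemma jacobiSkewCoeff_mul_betaFourForm (ha : -1 < a) (hb : -1 < b) (hab : a + b ≠ -1) (n : ℕ) :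
    jacobiSkewCoeff a b n *
        betaFourForm ha hb (jacobiMonicPoly a b (2 * n)) (jacobiMonicPoly a b (2 * n + 1)) =
      jacobiSkewCoeff a b (n + 1) *
        betaFourForm ha hb (jacobiMonicPoly a b (2 * n + 1)) (jacobiMonicPoly a b (2 * n + 2)) := by
  have _ : 0 ≤ (n : ℝ) := n.cast_nonneg
  have hcoeff := jacobiSkewCoeff_succ ha hb n
  have hnorm := jacobiSqNorm_succ ha hb (k := 2 * n + 1) (by push_cast; linarith)
  rw [betaFourForm_jacobiMonicPoly_succ ha hb hab, betaFourForm_jacobiMonicPoly_succ ha hb hab]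
  push_cast at hnorm ⊢
  have hpos₃ : 0 < a + b + 4 * n + 3 := by linarith
  have hpos₄ : 0 < a + b + 4 * n + 4 := by linarith
  have hpos₅ : 0 < a + b + 4 * n + 5 := by linarith
  refine mul_left_cancel₀ (mul_pos (mul_pos hpos₃ hpos₄) hpos₅).ne' ?_
  linear_combination -(jacobiSqNorm a b (2 * n + 1) / 2) * hcoeff -
    (jacobiSkewCoeff a b (n + 1) / 2) * hnorm

lemma betaFourForm_jacobiMonicPoly_even (ha : -1 < a) (hb : -1 < b) (hab : a + b ≠ -1) (m : ℕ) :
    betaFourForm ha hb (jacobiMonicPoly a b (2 * m)) (jacobiMonicPoly a b (2 * m + 1)) =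
      2 ^ (a + b + 4 * (m : ℝ) + 2) * Real.Gamma (2 * (m : ℝ) + 2) *
          Real.Gamma (a + 2 * (m : ℝ) + 2) * Real.Gamma (b + 2 * (m : ℝ) + 2) *
          Real.Gamma (a + b + 2 * (m : ℝ) + 2) /
          (Real.Gamma (a + b + 4 * (m : ℝ) + 2) * Real.Gamma (a + b + 4 * (m : ℝ) + 4)) := by
  have hpos : 0 < a + b + 4 * m + 2 := by linarith [m.cast_nonneg (α := ℝ)]
  have hfactorial : ((2 * m + 1).factorial : ℝ) = Real.Gamma (2 * m + 2) := by
    rw [← Real.Gamma_nat_eq_factorial]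
    push_cast
    ring_nf
  rw [betaFourForm_jacobiMonicPoly_succ ha hb hab, jacobiSqNorm, hfactorial]
  push_cast
  rw [show 2 * (m : ℝ) + (a + b) / 2 + 1 = (a + b + 4 * m + 2) / 2 by ring,
    show a + b + 2 * (2 * (m : ℝ) + 1) + 1 = a + b + 4 * m + 2 + 1 by ring,
    show a + b + 2 * (2 * (m : ℝ) + 1) + 2 = a + b + 4 * m + 4 by ring,
    show a + b + (2 * (m : ℝ) + 1) + 1 = a + b + 2 * m + 2 by ring,
    show a + (2 * (m : ℝ) + 1) + 1 = a + 2 * m + 2 by ring,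
    show b + (2 * (m : ℝ) + 1) + 1 = b + 2 * m + 2 by ring,
    Real.rpow_add_one two_ne_zero, Real.Gamma_add_one hpos.ne']
  field_simp

lemma qJSE_odd (a b : ℝ) (m : ℕ) :
    qJSE a b (2 * m + 1) = (jacobiMonicPoly a b (2 * m + 1)).eval := by
  ext x
  rw [qJSE, if_pos (by lia), eval_jacobiMonicPoly]

lemma qJSE_even (a b : ℝ) (m : ℕ) :
    qJSE a b (2 * m) =
      ((jacobiSkewCoeff a b m)⁻¹ •
        evenSum (jacobiSkewCoeff a b) (jacobiMonicPoly a b) m).eval := by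
  ext x
  rw [qJSE, if_neg (by lia), Nat.mul_div_cancel_left m two_pos, eval_smul, evenSum, eval_finsetSum,
    smul_eq_mul, jacobiSkewCoeff, inv_div]
  simp only [eval_smul, eval_jacobiMonicPoly, smul_eq_mul, jacobiSkewCoeff]
  rw [Nat.cast_mul, Nat.cast_ofNat, show 3 * (2 * m) = 6 * m by ring,
    show 2 * (2 * (m : ℝ)) = 4 * m by ring]
  ring

theorem jacobi_skew_orthogonal_beta4_general (a b : ℝ) (ha : -1 < a) (hb : -1 < b)
    (hab : a + b ≠ -1) (m n : ℕ) :
    sip4J a b (qJSE a b (2 * m)) (qJSE a b (2 * n)) = 0 ∧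
    sip4J a b (qJSE a b (2 * m + 1)) (qJSE a b (2 * n + 1)) = 0 ∧
    (m ≠ n → sip4J a b (qJSE a b (2 * m)) (qJSE a b (2 * n + 1)) = 0) ∧
    sip4J a b (qJSE a b (2 * m)) (qJSE a b (2 * m + 1))
      = 2 ^ (a + b + 4 * (m : ℝ) + 2) * Real.Gamma (2 * (m : ℝ) + 2) *
          Real.Gamma (a + 2 * (m : ℝ) + 2) * Real.Gamma (b + 2 * (m : ℝ) + 2) *
          Real.Gamma (a + b + 2 * (m : ℝ) + 2) /
          (Real.Gamma (a + b + 4 * (m : ℝ) + 2) * Real.Gamma (a + b + 4 * (m : ℝ) + 4)) := by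
  have halt := isAlt_betaFourForm ha hb
  have htri (j k : ℕ) (hjk : j + 1 < k) := betaFourForm_jacobiMonicPoly_of_lt ha hb hjk
  have hbalance := jacobiSkewCoeff_mul_betaFourForm ha hb hab
  simp only [qJSE_even, qJSE_odd, sip4J_eval ha hb, map_smul, LinearMap.smul_apply, smul_eq_mul]
  refine ⟨?_, ?_, fun hmn => ?_, ?_⟩
  · rw [apply_evenSum_evenSum halt htri, mul_zero, mul_zero]
  · exact apply_eq_zero_of_mod_two_eq halt htri (by lia)
  · rcases hmn.lt_or_gt with hlt | hgt
    · rw [apply_evenSum_odd_of_lt htri hlt, mul_zero]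
    · rw [apply_evenSum_odd_of_gt halt htri hbalance hgt, mul_zero]
  · rw [apply_evenSum_odd_self htri, inv_mul_cancel_left₀ (jacobiSkewCoeff_ne_zero ha hb m),
      betaFourForm_jacobiMonicPoly_even ha hb hab]

end SkewOrthogonality

/-- The family `{q̃_j}` is skew orthogonal for the β = 4 Jacobi skew inner product. -/
theorem jacobi_skew_orthogonal_beta4 (a b : ℝ) (ha : 0 < a) (hb : 0 < b) (m n : ℕ) :
    sip4J a b (qJSE a b (2 * m)) (qJSE a b (2 * n)) = 0 ∧
    sip4J a b (qJSE a b (2 * m + 1)) (qJSE a b (2 * n + 1)) = 0 ∧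
    (m ≠ n → sip4J a b (qJSE a b (2 * m)) (qJSE a b (2 * n + 1)) = 0) ∧
    sip4J a b (qJSE a b (2 * m)) (qJSE a b (2 * m + 1))
      = 2 ^ (a + b + 4 * (m : ℝ) + 2) * Real.Gamma (2 * (m : ℝ) + 2) *
          Real.Gamma (a + 2 * (m : ℝ) + 2) * Real.Gamma (b + 2 * (m : ℝ) + 2) *
          Real.Gamma (a + b + 2 * (m : ℝ) + 2) /
          (Real.Gamma (a + b + 4 * (m : ℝ) + 2) * Real.Gamma (a + b + 4 * (m : ℝ) + 4)) :=
  jacobi_skew_orthogonal_beta4_general a b (by linarith) (by linarith) (by linarith) m n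
end

section
/- Let N ≥ 2 be an even natural number. Define q_{2m}(x) = p_{2m}(x), q_{2m+1}(x) = p_{2m+1}(x) − m·p_{2m−1}(x) (with p_{−1} = 0), r_k = 2^{−2k} √π (2k)!, and Φ_k(x) = (1/2)∫_ℝ sgn(x−t)·q_k(t)·e^{−t²/2} dt, where p_k are the monic Hermite polynomials. Then for all real x, y: Σ_{k=0}^{N/2−1} (e^{−y²/2}/r_k)·(Φ_{2k}(x)·q_{2k+1}(y) − Φ_{2k+1}(x)·q_{2k}(y)) = e^{−(x²+y²)/2} Σ_{l=0}^{N−2} H_l(x)H_l(y)/(√π·2^l·l!) + (2^{N−2}/(√π·(N−2)!))·e^{−y²/2}·p_{N−1}(y)·(1/2)∫_ℝ sgn(x−t)·e^{−t²/2}·p_{N−2}(t) dt. -/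
open MeasureTheory Finset

/-- The physicists' Hermite polynomials. -/
noncomputable def hermiteH : ℕ → ℝ → ℝ
  | 0, _ => 1
  | 1, x => 2 * x
  | (n + 2), x => 2 * x * hermiteH (n + 1) x - 2 * (n + 1) * hermiteH n x

/-- The monic Hermite polynomials `p_k = 2^{−k} H_k`. -/
noncomputable def hermiteP (k : ℕ) (x : ℝ) : ℝ := hermiteH k x / 2 ^ k

/-- `q_{2m} = p_{2m}`, `q_{2m+1} = p_{2m+1} − m p_{2m−1}`. -/
noncomputable def qGOE (j : ℕ) (x : ℝ) : ℝ :=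
  if j % 2 = 0 then hermiteP j x
  else hermiteP j x - (j / 2 : ℕ) * hermiteP (j - 2) x

/-- The normalizations `r_k = 2^{−2k} √π (2k)!`. -/
noncomputable def rGOE (k : ℕ) : ℝ :=
  Real.sqrt Real.pi * (Nat.factorial (2 * k)) / 2 ^ (2 * k)

/-- `Φ_k(x) = (1/2)∫ sgn(x−t) q_k(t) e^{−t²/2} dt`. -/
noncomputable def PhiGOE (k : ℕ) (x : ℝ) : ℝ :=
  (1 / 2) * ∫ t : ℝ, Real.sign (x - t) * qGOE k t * Real.exp (-t ^ 2 / 2)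

/-!
Let `φ_n = p_n e^{-t²/2}` and `(ε f)(x) = ½ ∫ sgn(x - t) f(t) dt`, the inverse of differentiation on
functions vanishing at `±∞`. The Hermite recurrences give `φ_n' = (n/2) φ_{n-1} - φ_{n+1}`, so the
weighted `q_{2k+1}` is exactly `-φ_{2k}'` and `Φ_{2k+1} = -φ_{2k}`; applying `ε` for general `n`
gives `ε φ_{n+2} = ((n+1)/2) ε φ_n - φ_{n+1}`. Since `r_k = h_{2k}`, where `h_n = √π n! / 2^n`
satisfies `h_{n+1} = ((n+1)/2) h_n`, this makes the terms `ε φ_{2k}(x) φ_{2k+1}(y) / h_{2k}`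
telescope, and what is left over is `∑ φ_l(x) φ_l(y) / h_l`.
-/

open Filter Topology Polynomial

section HalfSignIntegral

variable {E : Type*} [NormedAddCommGroup E] [NormedSpace ℝ E] {f g f' : ℝ → E}

/-- The operator `(ε f)(x) = ½ ∫ sgn(x - t) f(t) dt` of random matrix theory; it takes the junk
value `0` when `f` is not integrable. -/
noncomputable def halfSignIntegral (f : ℝ → E) (x : ℝ) : E :=
  (1 / 2 : ℝ) • ∫ t : ℝ, Real.sign (x - t) • f t

lemma sign_sub_smul_ae_eq_indicator (f : ℝ → E) (x : ℝ) :
    (fun t => Real.sign (x - t) • f t) =ᵐ[volume]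
      (Set.Iic x).indicator f - (Set.Ioi x).indicator f := by
  filter_upwards [Measure.ae_ne volume x] with t ht
  rcases ht.lt_or_gt with h | h
  · simp [h.le, h.not_gt, Real.sign_of_pos (sub_pos.2 h)]
  · simp [h, h.not_ge, Real.sign_of_neg (sub_neg.2 h)]

lemma integrable_sign_sub_smul (hf : Integrable f) (x : ℝ) :
    Integrable fun t => Real.sign (x - t) • f t :=
  ((hf.indicator measurableSet_Iic).sub (hf.indicator measurableSet_Ioi)).congr
    (sign_sub_smul_ae_eq_indicator f x).symm

lemma halfSignIntegral_eq_setIntegral_sub (hf : Integrable f) (x : ℝ) :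
    halfSignIntegral f x =
      (1 / 2 : ℝ) • ((∫ t in Set.Iic x, f t) - ∫ t in Set.Ioi x, f t) := by
  rw [halfSignIntegral, integral_congr_ae (sign_sub_smul_ae_eq_indicator f x),
    integral_sub' (hf.indicator measurableSet_Iic) (hf.indicator measurableSet_Ioi),
    integral_indicator measurableSet_Iic, integral_indicator measurableSet_Ioi]

lemma halfSignIntegral_sub (hf : Integrable f) (hg : Integrable g) (x : ℝ) :
    halfSignIntegral (fun t => f t - g t) x = halfSignIntegral f x - halfSignIntegral g x := by
  simp only [halfSignIntegral, smul_sub,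
    integral_sub (integrable_sign_sub_smul hf x) (integrable_sign_sub_smul hg x)]

lemma halfSignIntegral_const_smul (c : ℝ) (f : ℝ → E) (x : ℝ) :
    halfSignIntegral (fun t => c • f t) x = c • halfSignIntegral f x := by
  simp only [halfSignIntegral, smul_comm _ c, integral_smul]

variable [CompleteSpace E]

lemma halfSignIntegral_of_hasDerivAt_of_tendsto {a b : E} (hderiv : ∀ x, HasDerivAt f (f' x) x)
    (hf' : Integrable f') (ha : Tendsto f atBot (𝓝 a)) (hb : Tendsto f atTop (𝓝 b)) (x : ℝ) :
    halfSignIntegral f' x = f x - (1 / 2 : ℝ) • (a + b) := by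
  rw [halfSignIntegral_eq_setIntegral_sub hf',
    integral_Iic_of_hasDerivAt_of_tendsto' (fun t _ => hderiv t) hf'.integrableOn ha,
    integral_Ioi_of_hasDerivAt_of_tendsto' (fun t _ => hderiv t) hf'.integrableOn hb]
  module

lemma halfSignIntegral_of_hasDerivAt (hderiv : ∀ x, HasDerivAt f (f' x) x)
    (hf : Integrable f) (hf' : Integrable f') (x : ℝ) : halfSignIntegral f' x = f x := by
  have hbot : Tendsto f atBot (𝓝 0) := tendsto_zero_of_hasDerivAt_of_integrableOn_Iic (a := x)
    (fun t _ => hderiv t) hf'.integrableOn hf.integrableOn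
  have htop : Tendsto f atTop (𝓝 0) := tendsto_zero_of_hasDerivAt_of_integrableOn_Ioi (a := x)
    (fun t _ => hderiv t) hf'.integrableOn hf.integrableOn
  simpa using halfSignIntegral_of_hasDerivAt_of_tendsto hderiv hf' hbot htop x

end HalfSignIntegral

lemma integrable_polynomial_eval_mul_exp_neg_mul_sq (P : ℝ[X]) {b : ℝ} (hb : 0 < b) :
    Integrable fun t : ℝ => P.eval t * Real.exp (-b * t ^ 2) := by
  simp only [Polynomial.eval_eq_sum_range, Finset.sum_mul, mul_assoc]
  refine integrable_finsetSum _ fun i _ => Integrable.const_mul ?_ _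
  simpa only [Real.rpow_natCast] using
    integrable_rpow_mul_exp_neg_mul_sq hb (neg_one_lt_zero.trans_le i.cast_nonneg)

lemma hasDerivAt_exp_neg_sq_div_two (x : ℝ) :
    HasDerivAt (fun t : ℝ => Real.exp (-t ^ 2 / 2)) (-x * Real.exp (-x ^ 2 / 2)) x := by
  have h : HasDerivAt (fun t : ℝ => -t ^ 2 / 2) (-x) x :=
    (((hasDerivAt_pow 2 x).neg).div_const 2).congr_deriv (by norm_num; ring)
  exact h.exp.congr_deriv (mul_comm _ _)

lemma hermiteH_eq_two_pow_mul_hermiteP (n : ℕ) (x : ℝ) :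
    hermiteH n x = 2 ^ n * hermiteP n x := by
  rw [hermiteP]
  field_simp

lemma hermiteP_zero (x : ℝ) : hermiteP 0 x = 1 := by simp [hermiteP, hermiteH]

lemma hermiteP_one (x : ℝ) : hermiteP 1 x = x := by simp [hermiteP, hermiteH]

lemma hermiteP_add_two (n : ℕ) (x : ℝ) :
    hermiteP (n + 2) x = x * hermiteP (n + 1) x - (n + 1) / 2 * hermiteP n x := by
  simp only [hermiteP, hermiteH]
  field_simp
  ring

-- At `n = 0` the truncated index `n - 1` is harmless: its coefficient vanishes.
lemma hermiteP_succ (n : ℕ) (x : ℝ) :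
    hermiteP (n + 1) x = x * hermiteP n x - n / 2 * hermiteP (n - 1) x := by
  cases n with
  | zero => simp [hermiteP_zero, hermiteP_one]
  | succ n => simpa using hermiteP_add_two n x

lemma exists_polynomial_eval_eq_hermiteP (n : ℕ) : ∃ P : ℝ[X], ∀ x, P.eval x = hermiteP n x := by
  induction n using Nat.twoStepInduction with
  | zero => exact ⟨1, fun x => by simp [hermiteP_zero]⟩
  | one => exact ⟨X, fun x => by simp [hermiteP_one]⟩
  | more n ihn ihn' =>
    obtain ⟨P, hP⟩ := ihn
    obtain ⟨Q, hQ⟩ := ihn'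
    exact ⟨X * Q - C ((n + 1) / 2 : ℝ) * P, fun x => by
      simp only [eval_sub, eval_mul, eval_X, eval_C, hP, hQ, hermiteP_add_two]⟩

lemma hasDerivAt_hermiteP (n : ℕ) (x : ℝ) :
    HasDerivAt (hermiteP n) (n * hermiteP (n - 1) x) x := by
  induction n using Nat.twoStepInduction with
  | zero =>
    rw [funext hermiteP_zero]
    simpa using hasDerivAt_const x (1 : ℝ)
  | one =>
    rw [funext hermiteP_one]
    simpa [hermiteP_zero] using hasDerivAt_id' x
  | more n ihn ihn' =>
    rw [funext (hermiteP_add_two n)]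
    refine (((hasDerivAt_id' x).mul ihn').sub (ihn.const_mul _)).congr_deriv ?_
    simp only [Nat.add_sub_cancel, Nat.reduceSubDiff, hermiteP_succ n]
    push_cast
    ring

/-- The weighted monic Hermite polynomial `φ_n(t) = p_n(t) e^{-t²/2}`. -/
noncomputable def hermiteGauss (n : ℕ) (t : ℝ) : ℝ := hermiteP n t * Real.exp (-t ^ 2 / 2)

lemma integrable_hermiteGauss (n : ℕ) : Integrable (hermiteGauss n) := by
  obtain ⟨P, hP⟩ := exists_polynomial_eval_eq_hermiteP n
  refine (integrable_polynomial_eval_mul_exp_neg_mul_sq P one_half_pos).congr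
    (.of_forall fun t => ?_)
  simp only [hP, hermiteGauss]
  ring_nf

lemma hasDerivAt_hermiteGauss (n : ℕ) (x : ℝ) :
    HasDerivAt (hermiteGauss n) (n / 2 * hermiteGauss (n - 1) x - hermiteGauss (n + 1) x) x := by
  refine ((hasDerivAt_hermiteP n x).mul (hasDerivAt_exp_neg_sq_div_two x)).congr_deriv ?_
  simp only [hermiteGauss, hermiteP_succ]
  ring

lemma halfSignIntegral_hermiteGauss_succ_sub (n : ℕ) (x : ℝ) :
    halfSignIntegral (fun t => hermiteGauss (n + 1) t - n / 2 * hermiteGauss (n - 1) t) x =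
      -hermiteGauss n x :=
  halfSignIntegral_of_hasDerivAt
    (fun t => (hasDerivAt_hermiteGauss n t).neg.congr_deriv (neg_sub _ _))
    (integrable_hermiteGauss n).neg
    ((integrable_hermiteGauss (n + 1)).sub ((integrable_hermiteGauss (n - 1)).const_mul _)) x

lemma halfSignIntegral_hermiteGauss_add_two (n : ℕ) (x : ℝ) :
    halfSignIntegral (hermiteGauss (n + 2)) x =
      ((n + 1 : ℕ) : ℝ) / 2 * halfSignIntegral (hermiteGauss n) x - hermiteGauss (n + 1) x := by
  have h := halfSignIntegral_hermiteGauss_succ_sub (n + 1) x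
  rw [halfSignIntegral_sub (integrable_hermiteGauss _) ((integrable_hermiteGauss _).const_mul _)]
    at h
  simp only [← smul_eq_mul, halfSignIntegral_const_smul] at h ⊢
  simp only [Nat.add_sub_cancel] at h
  linear_combination h

/-- The squared norm `h_n = √π n! / 2^n` of `p_n` in `L²(e^{-t²} dt)`. -/
noncomputable def hermiteNormSq (n : ℕ) : ℝ := √Real.pi * n.factorial / 2 ^ n

lemma hermiteNormSq_ne_zero (n : ℕ) : hermiteNormSq n ≠ 0 := by
  unfold hermiteNormSq
  positivity

lemma hermiteNormSq_succ (n : ℕ) :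
    hermiteNormSq (n + 1) = ((n + 1 : ℕ) : ℝ) / 2 * hermiteNormSq n := by
  simp only [hermiteNormSq, Nat.factorial_succ, pow_succ]
  push_cast
  field_simp

lemma exp_mul_hermiteH_mul_hermiteH_div (l : ℕ) (x y : ℝ) :
    Real.exp (-(x ^ 2 + y ^ 2) / 2) *
        (hermiteH l x * hermiteH l y / (√Real.pi * 2 ^ l * l.factorial)) =
      hermiteGauss l x * hermiteGauss l y / hermiteNormSq l := by
  have hexp : Real.exp (-(x ^ 2 + y ^ 2) / 2) = Real.exp (-x ^ 2 / 2) * Real.exp (-y ^ 2 / 2) := by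
    rw [← Real.exp_add]
    ring_nf
  simp only [hexp, hermiteH_eq_two_pow_mul_hermiteP, hermiteGauss, hermiteNormSq]
  field_simp

lemma qGOE_even (k : ℕ) (x : ℝ) : qGOE (2 * k) x = hermiteP (2 * k) x := by simp [qGOE]

lemma qGOE_odd (k : ℕ) (x : ℝ) :
    qGOE (2 * k + 1) x = hermiteP (2 * k + 1) x - k * hermiteP (2 * k - 1) x := by
  simp [qGOE, Nat.add_mod, Nat.mul_add_div]

lemma PhiGOE_eq_halfSignIntegral (k : ℕ) (x : ℝ) :
    PhiGOE k x = halfSignIntegral (fun t => qGOE k t * Real.exp (-t ^ 2 / 2)) x := by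
  simp only [PhiGOE, halfSignIntegral, smul_eq_mul, mul_assoc]

lemma PhiGOE_even (k : ℕ) (x : ℝ) :
    PhiGOE (2 * k) x = halfSignIntegral (hermiteGauss (2 * k)) x := by
  simp only [PhiGOE_eq_halfSignIntegral, qGOE_even]
  rfl

lemma PhiGOE_odd (k : ℕ) (x : ℝ) : PhiGOE (2 * k + 1) x = -hermiteGauss (2 * k) x := by
  rw [PhiGOE_eq_halfSignIntegral, ← halfSignIntegral_hermiteGauss_succ_sub]
  congr 1 with t
  simp only [hermiteGauss, qGOE_odd]
  push_cast
  ring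

lemma goe_kernel_term_eq (k : ℕ) (x y : ℝ) :
    (Real.exp (-y ^ 2 / 2) / rGOE k) *
        (PhiGOE (2 * k) x * qGOE (2 * k + 1) y - PhiGOE (2 * k + 1) x * qGOE (2 * k) y) =
      (halfSignIntegral (hermiteGauss (2 * k)) x *
          (hermiteGauss (2 * k + 1) y - ((2 * k : ℕ) : ℝ) / 2 * hermiteGauss (2 * k - 1) y) +
        hermiteGauss (2 * k) x * hermiteGauss (2 * k) y) / hermiteNormSq (2 * k) := by
  rw [PhiGOE_even, PhiGOE_odd, qGOE_even, qGOE_odd, show rGOE k = hermiteNormSq (2 * k) from rfl]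
  simp only [hermiteGauss]
  push_cast
  ring

lemma sum_range_div_eq_diagonal_add {K : Type*} [Field K] {c e a b h : ℕ → K} (hc : c 0 = 0)
    (he : ∀ n, e (n + 2) = c (n + 1) * e n - a (n + 1))
    (hh : ∀ n, h (n + 1) = c (n + 1) * h n) (hh0 : ∀ n, h n ≠ 0) (M : ℕ) :
    ∑ k ∈ range (M + 1),
        (e (2 * k) * (b (2 * k + 1) - c (2 * k) * b (2 * k - 1)) + a (2 * k) * b (2 * k)) /
          h (2 * k) =
      ∑ l ∈ range (2 * M + 1), a l * b l / h l + e (2 * M) * b (2 * M + 1) / h (2 * M) := by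
  induction M with
  | zero => simp [hc, add_div, add_comm]
  | succ M ih =>
    have hc0 : ∀ n, c (n + 1) ≠ 0 := fun n => left_ne_zero_of_mul (hh n ▸ hh0 (n + 1))
    have hc_odd : c (2 * M + 1) ≠ 0 := hc0 _
    have hc_even : c (2 * M + 1 + 1) ≠ 0 := hc0 _
    have hM : h (2 * M) ≠ 0 := hh0 _
    rw [sum_range_succ, ih, show 2 * (M + 1) = 2 * M + 1 + 1 by ring, Nat.add_sub_cancel,
      sum_range_succ _ (2 * M + 1 + 1), sum_range_succ _ (2 * M + 1), he, hh (2 * M + 1),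
      hh (2 * M)]
    field_simp
    ring

/-- Closed-form summation of the GOE kernel `S₁(x,y)` for `N` even. -/
theorem goe_kernel_summation (N : ℕ) (hN : 2 ≤ N) (hNeven : Even N) (x y : ℝ) :
    ∑ k ∈ range (N / 2), (Real.exp (-y ^ 2 / 2) / rGOE k) *
        (PhiGOE (2 * k) x * qGOE (2 * k + 1) y - PhiGOE (2 * k + 1) x * qGOE (2 * k) y)
      = Real.exp (-(x ^ 2 + y ^ 2) / 2) *
          ∑ l ∈ range (N - 1),
            hermiteH l x * hermiteH l y / (Real.sqrt Real.pi * 2 ^ l * (Nat.factorial l))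
        + (2 ^ (N - 2) / (Real.sqrt Real.pi * (Nat.factorial (N - 2)))) *
            Real.exp (-y ^ 2 / 2) * hermiteP (N - 1) y *
            ((1 / 2) * ∫ t : ℝ, Real.sign (x - t) * Real.exp (-t ^ 2 / 2) * hermiteP (N - 2) t) := by
  obtain ⟨M, rfl⟩ : ∃ M, N = 2 * (M + 1) := by
    obtain ⟨m, rfl⟩ := hNeven
    exact ⟨m - 1, by omega⟩
  have hboundary : (1 / 2) * ∫ t : ℝ,
      Real.sign (x - t) * Real.exp (-t ^ 2 / 2) * hermiteP (2 * M) t =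
        halfSignIntegral (hermiteGauss (2 * M)) x := by
    simp only [halfSignIntegral, hermiteGauss, smul_eq_mul, mul_assoc, mul_comm (Real.exp _)]
  rw [Nat.mul_div_cancel_left _ two_pos, show 2 * (M + 1) - 1 = 2 * M + 1 by omega,
    show 2 * (M + 1) - 2 = 2 * M by omega, hboundary, mul_sum]
  simp only [goe_kernel_term_eq, exp_mul_hermiteH_mul_hermiteH_div]
  rw [sum_range_div_eq_diagonal_add (c := fun n => (n : ℝ) / 2)
    (e := fun n => halfSignIntegral (hermiteGauss n) x) (a := (hermiteGauss · x))
    (b := (hermiteGauss · y)) (by simp) (fun n => halfSignIntegral_hermiteGauss_add_two n x)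
    hermiteNormSq_succ hermiteNormSq_ne_zero]
  congr 1
  simp only [hermiteGauss, hermiteNormSq]
  field_simp
end
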